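/- arXiv:2303.14657 — 2 statements merged into one kernel-verified Lean document; each statement's English description precedes it below -/
import Mathlib

section
/- Let N ≥ 1 and f : (ℝ²)^N → (ℝ²)^N be continuously differentiable. Assume there exists Z* ∈ (ℝ²)^N with f(Z*) = 0 and that the Jacobian Df(Z*) has an eigenvalue with positive real part λ₀ > 0. Then for every λ ∈ (0, λ₀), every β ∈ (0,1) and every sufficiently small ε > 0, there exist Z₀ ∈ (ℝ²)^N with |Z₀ − Z*|_∞ = ε/2 and a solution Z of dZ/dt = f(Z(t)), Z(0) = Z₀, such that τ_Z ≤ ((1−β)/λ) |ln ε|, where τ_Z = sup{ t ≥ 0 : for all s ∈ [0,t], |Z(s) − Z*|_∞ ≤ 2ε^β }. -/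
/-- The `2N × 2N` real matrix of the total derivative of `f : (ℝ²)^N → (ℝ²)^N`
(with `ℝ²` identified with `ℂ`) at the point `Z`, in the real basis `(1, i)` of each factor. -/
noncomputable def jacobianMatrix (N : ℕ) (f : (Fin N → ℂ) → (Fin N → ℂ))
    (Z : Fin N → ℂ) : Matrix (Σ _ : Fin N, Fin 2) (Σ _ : Fin N, Fin 2) ℝ :=
  LinearMap.toMatrix (Pi.basis fun _ : Fin N => Complex.basisOneI)
    (Pi.basis fun _ : Fin N => Complex.basisOneI)
    (fderiv ℝ f Z : (Fin N → ℂ) →ₗ[ℝ] (Fin N → ℂ))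

/-- `μ` is a (possibly complex) eigenvalue of the Jacobian of `f` at `Z`, i.e. a root of
the characteristic polynomial of the `2N × 2N` real matrix representing `Df(Z)`. -/
def IsJacobianEigenvalue (N : ℕ) (f : (Fin N → ℂ) → (Fin N → ℂ))
    (Z : Fin N → ℂ) (μ : ℂ) : Prop :=
  (((jacobianMatrix N f Z).charpoly).map (algebraMap ℝ ℂ)).IsRoot μ

open Set Filter Topology

lemma aux_eig {ι E : Type*} [Fintype ι] [DecidableEq ι] [AddCommGroup E] [Module ℝ E]
    (b : Module.Basis ι ℝ E) (A : E →ₗ[ℝ] E) (μ : ℂ)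
    (h : (((LinearMap.toMatrix b b A).charpoly).map (algebraMap ℝ ℂ)).IsRoot μ) :
    ∃ x y : E, (x ≠ 0 ∨ y ≠ 0) ∧ A x = μ.re • x - μ.im • y ∧ A y = μ.im • x + μ.re • y := by
  set M := LinearMap.toMatrix b b A with hM
  rw [← Matrix.charpoly_map, Polynomial.IsRoot, Matrix.eval_charpoly] at h
  obtain ⟨v, hv0, hv⟩ := Matrix.exists_mulVec_eq_zero_iff.mpr h
  have hv' : ∀ i, ∑ j, (M i j : ℂ) * v j = μ * v i := by
    intro i
    have := congrFun hv i
    rw [Matrix.sub_mulVec] at this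
    simp [Matrix.scalar_apply, Matrix.mulVec, dotProduct] at this
    linear_combination -this
  have key : ∀ w : ι → ℝ, A (b.equivFun.symm w) = b.equivFun.symm (M.mulVec w) := by
    intro w
    apply b.equivFun.injective
    have := LinearMap.toMatrix_mulVec_repr b b A (b.equivFun.symm w)
    rw [LinearEquiv.apply_symm_apply, b.equivFun_apply, ← this, ← b.equivFun_apply,
      LinearEquiv.apply_symm_apply]
  refine ⟨b.equivFun.symm (fun i => (v i).re), b.equivFun.symm (fun i => (v i).im), ?_, ?_, ?_⟩
  · by_contra! hc
    apply hv0
    have h1 := (LinearEquiv.map_eq_zero_iff _).1 hc.1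
    have h2 := (LinearEquiv.map_eq_zero_iff _).1 hc.2
    ext i
    exact Complex.ext (congrFun h1 i) (congrFun h2 i)
  · rw [key, ← map_smul, ← map_smul, ← map_sub]
    congr 1
    ext i
    have := congrArg Complex.re (hv' i)
    simpa [Matrix.mulVec, dotProduct] using this
  · rw [key, ← map_smul, ← map_smul, ← map_add]
    congr 1
    ext i
    have := congrArg Complex.im (hv' i)
    simp [Matrix.mulVec, dotProduct] at this ⊢
    linarith

lemma aux_spec {V : Type*} [AddCommGroup V] [Module ℝ V] [FiniteDimensional ℝ V]
    (L : V →ₗ[ℝ] V) (lam a : ℝ) (hla : lam < a) :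
    ∃ s ∈ Ioo lam a, ∀ G : V, ∃ B : V, L B - (2 * s) • B = G := by
  have hfin := Module.End.finite_spectrum L
  have hfin2 : Set.Finite {s : ℝ | 2 * s ∈ spectrum ℝ L} :=
    hfin.preimage (f := fun s : ℝ => 2 * s) (by intro p _ q _ h; simpa using h)
  obtain ⟨s, hs, hns⟩ := ((Set.Ioo_infinite hla).sdiff hfin2).nonempty
  have hu : IsUnit (algebraMap ℝ (Module.End ℝ V) (2 * s) - L) := by
    by_contra hc
    exact hns hc
  refine ⟨s, hs, fun G => ?_⟩
  obtain ⟨B, hB⟩ := ((Module.End.isUnit_iff _).1 hu).2 (-G)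
  refine ⟨B, ?_⟩
  rw [LinearMap.sub_apply, Module.algebraMap_end_apply] at hB
  rw [← neg_sub, hB, neg_neg]

lemma aux_lyap (N : ℕ) (A : (Fin N → ℂ) →L[ℝ] (Fin N → ℂ)) (a c lam : ℝ) (hla : lam < a)
    (x y : Fin N → ℂ) (hxy : x ≠ 0 ∨ y ≠ 0) (hx : A x = a • x - c • y)
    (hy : A y = c • x + a • y) :
    ∃ (s : ℝ) (B : (Fin N → ℂ) →L[ℝ] (Fin N → ℂ) →L[ℝ] ℝ), lam < s ∧
      (∀ z, ‖z‖ ^ 2 ≤ B (A z) z + B z (A z) - 2 * s * B z z) ∧ ∃ z, 0 < B z z := by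
  let A' : (Fin N → ℂ) →ₗ[ℝ] (Fin N → ℂ) := A
  let L : ((Fin N → ℂ) →ₗ[ℝ] (Fin N → ℂ) →ₗ[ℝ] ℝ) →ₗ[ℝ] ((Fin N → ℂ) →ₗ[ℝ] (Fin N → ℂ) →ₗ[ℝ] ℝ) :=
    { toFun := fun B => B ∘ₗ A' + B.compl₂ A'
      map_add' := by intro B C; refine LinearMap.ext₂ fun z w => ?_; simp; ring
      map_smul' := by intro r B; refine LinearMap.ext₂ fun z w => ?_; simp; try ring }
  have hL : ∀ (B : (Fin N → ℂ) →ₗ[ℝ] (Fin N → ℂ) →ₗ[ℝ] ℝ) z w, L B z w = B (A z) w + B z (A w) := fun B z w => rfl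
  obtain ⟨s, hs, hsurj⟩ := aux_spec (V := (Fin N → ℂ) →ₗ[ℝ] (Fin N → ℂ) →ₗ[ℝ] ℝ) L lam a hla
  let G : (Fin N → ℂ) →ₗ[ℝ] (Fin N → ℂ) →ₗ[ℝ] ℝ := LinearMap.mk₂ ℝ (fun u v => ∑ i, ((u i).re * (v i).re + (u i).im * (v i).im))
    (by intros; simp [← Finset.sum_add_distrib]; congr 1; ext; ring)
    (by intros; simp [Finset.mul_sum]; congr 1; ext; ring)
    (by intros; simp [← Finset.sum_add_distrib]; congr 1; ext; ring)
    (by intros; simp [Finset.mul_sum]; congr 1; ext; ring)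
  have hG : ∀ z, ‖z‖ ^ 2 ≤ G z z := by
    intro z
    have h0 : ∀ i, ‖z i‖ ^ 2 = (z i).re * (z i).re + (z i).im * (z i).im := by
      intro i; rw [← Complex.normSq_eq_norm_sq, Complex.normSq_apply]
    have h1 : G z z = ∑ i, ‖z i‖ ^ 2 := by simp [h0, G]
    have h2 : 0 ≤ G z z := by rw [h1]; positivity
    rw [← Real.sq_sqrt h2]
    gcongr
    rw [pi_norm_le_iff_of_nonneg (Real.sqrt_nonneg _)]
    intro i
    apply Real.le_sqrt_of_sq_le
    rw [h1]
    exact Finset.single_le_sum (f := fun i => ‖z i‖ ^ 2) (fun _ _ => by positivity) (Finset.mem_univ i)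
  obtain ⟨B, hB⟩ := hsurj G
  have hB' : ∀ z, B (A z) z + B z (A z) - 2 * s * B z z = G z z := by
    intro z
    have := congrArg (fun C : (Fin N → ℂ) →ₗ[ℝ] (Fin N → ℂ) →ₗ[ℝ] ℝ => C z z) hB
    simp [hL] at this
    linarith
  refine ⟨s, B.toContinuousBilinearMap, hs.1, ?_, ?_⟩
  · intro z
    simp only [LinearMap.toContinuousBilinearMap_apply]
    rw [hB' z]; exact hG z
  · simp only [LinearMap.toContinuousBilinearMap_apply]
    have h1 := hB' x
    have h2 := hB' y
    rw [hx] at h1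
    rw [hy] at h2
    simp at h1 h2
    have h3 : 2 * (a - s) * (B x x + B y y) = G x x + G y y := by linarith
    have h4 : 0 < G x x + G y y := by
      have := hG x; have := hG y
      rcases hxy with h | h
      · have : 0 < ‖x‖ ^ 2 := by positivity
        have : 0 ≤ ‖y‖ ^ 2 := by positivity
        linarith
      · have : 0 < ‖y‖ ^ 2 := by positivity
        have : 0 ≤ ‖x‖ ^ 2 := by positivity
        linarith
    have h5 : 0 < B x x + B y y := by
      rw [← h3] at h4
      exact pos_of_mul_pos_right h4 (by linarith [hs.2])
    by_contra! hc
    linarith [hc x, hc y]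

lemma aux_growth {E : Type*} [NormedAddCommGroup E] [NormedSpace ℝ E]
    (A : E →L[ℝ] E) (B : E →L[ℝ] E →L[ℝ] ℝ) (s η T : ℝ) (hT : 0 ≤ T)
    (hB : ∀ z, ‖z‖ ^ 2 ≤ B (A z) z + B z (A z) - 2 * s * B z z)
    (hη : 2 * ‖B‖ * η ≤ 1) (u u' : ℝ → E)
    (hu : ∀ t ∈ Icc 0 T, HasDerivAt u (u' t) t)
    (hR : ∀ t ∈ Icc 0 T, ‖u' t - A (u t)‖ ≤ η * ‖u t‖) :
    Real.exp (2 * s * T) * B (u 0) (u 0) ≤ B (u T) (u T) := by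
  have hd : ∀ t ∈ Icc 0 T, HasDerivAt (fun t => Real.exp (-(2 * s) * t) * B (u t) (u t))
      (Real.exp (-(2 * s) * t) * (-(2*s)) * B (u t) (u t) +
        Real.exp (-(2 * s) * t) * (B (u' t) (u t) + B (u t) (u' t))) t := by
    intro t ht
    have h1 : HasDerivAt (fun t : ℝ => Real.exp (-(2 * s) * t))
        (Real.exp (-(2 * s) * t) * (-(2*s))) t := by
      simpa using ((hasDerivAt_id t).const_mul (-(2*s))).exp
    have h2 : HasDerivAt (fun t => B (u t) (u t)) (B (u' t) (u t) + B (u t) (u' t)) t :=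
      (B.hasFDerivAt.comp_hasDerivAt t (hu t ht)).clm_apply (hu t ht)
    exact h1.mul h2
  have hm : MonotoneOn (fun t => Real.exp (-(2 * s) * t) * B (u t) (u t)) (Icc 0 T) := by
    apply monotoneOn_of_deriv_nonneg (convex_Icc 0 T)
    · exact fun t ht => (hd t ht).continuousAt.continuousWithinAt
    · intro t ht
      rw [interior_Icc] at ht
      exact (hd t (Ioo_subset_Icc_self ht)).differentiableAt.differentiableWithinAt
    · intro t ht
      rw [interior_Icc] at ht
      have ht' := Ioo_subset_Icc_self ht
      rw [(hd t ht').deriv]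
      set w := u' t - A (u t) with hw
      have hw' : u' t = A (u t) + w := by simp [hw]
      have hwn := hR t ht'
      rw [← hw] at hwn
      have e1 : |B w (u t)| ≤ ‖B‖ * (η * ‖u t‖) * ‖u t‖ :=
        (B.le_opNorm₂ w (u t)).trans (by gcongr)
      have e2 : |B (u t) w| ≤ ‖B‖ * ‖u t‖ * (η * ‖u t‖) :=
        (B.le_opNorm₂ (u t) w).trans (by gcongr)
      have e3 : 2 * ‖B‖ * η * ‖u t‖ ^ 2 ≤ 1 * ‖u t‖ ^ 2 := by gcongr
      have e4 := hB (u t)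
      have e5 := (abs_le.1 e1).1
      have e6 := (abs_le.1 e2).1
      have : 0 ≤ -(2 * s) * B (u t) (u t) + (B (u' t) (u t) + B (u t) (u' t)) := by
        rw [hw']
        simp only [map_add, add_apply]
        nlinarith
      have := mul_nonneg (Real.exp_pos (-(2 * s) * t)).le this
      linarith
  have := hm (left_mem_Icc.2 hT) (right_mem_Icc.2 hT) hT
  simp only [mul_zero, Real.exp_zero, one_mul] at this
  calc _ ≤ Real.exp (2 * s * T) * (Real.exp (-(2 * s) * T) * B (u T) (u T)) := by gcongr
    _ = _ := by rw [← mul_assoc, ← Real.exp_add]; simp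

lemma aux_ode {E : Type*} [NormedAddCommGroup E] [NormedSpace ℝ E] [FiniteDimensional ℝ E]
    (f : E → E) (hf : ContDiff ℝ 1 f) (p : E) (r : ℝ) (hr : 0 < r) (z : E) (T : ℝ) (hT : 0 ≤ T) :
    ∃ W : ℝ → E, W 0 = z ∧ ∀ t ∈ Icc 0 T, ∃ w, HasDerivAt W w t ∧ (‖W t - p‖ ≤ r → w = f (W t)) := by
  have : CompleteSpace E := FiniteDimensional.complete ℝ E
  let χ : ContDiffBump p := ⟨r, r + 1, hr, by linarith⟩
  let g : E → E := fun x => χ x • f x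
  have hg : ContDiff ℝ 1 g := χ.contDiff.smul hf
  have hgs : HasCompactSupport g := χ.hasCompactSupport.smul_right
  obtain ⟨K, hK⟩ := hg.lipschitzWith_of_hasCompactSupport hgs one_ne_zero
  obtain ⟨M, hM⟩ := hg.continuous.bounded_above_of_compact_support hgs
  have hM0 : 0 ≤ M := (norm_nonneg _).trans (hM p)
  have h0 : (0:ℝ) ∈ Icc (-1) (T+1) := ⟨by norm_num, by linarith⟩
  have hP : IsPicardLindelof (fun _ : ℝ => g) (⟨0, h0⟩ : Icc (-1:ℝ) (T+1)) z
      (⟨M * (T + 1), by positivity⟩) 0 ⟨M, hM0⟩ K := by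
    apply IsPicardLindelof.of_time_independent
    · intro x _; exact hM x
    · exact hK.lipschitzOnWith
    · have : max (T + 1 - 0) ((0:ℝ) - (-1)) = T + 1 := by
        rw [max_eq_left] <;> linarith
      simp only [this]; simp only [NNReal.coe_zero, sub_zero]; exact le_rfl
  obtain ⟨W, hW0, hW⟩ := hP.exists_eq_forall_mem_Icc_hasDerivWithinAt₀
  refine ⟨W, hW0, fun t ht => ⟨g (W t), ?_, ?_⟩⟩
  · exact (hW t ⟨by linarith [ht.1], by linarith [ht.2]⟩).hasDerivAt
      (Icc_mem_nhds (by linarith [ht.1]) (by linarith [ht.2]))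
  · intro h
    have : χ (W t) = 1 := χ.one_of_mem_closedBall (by simpa [dist_eq_norm] using h)
    simp [g, this]

/-- if `f(Z*) = 0` and `Df(Z*)` has an eigenvalue with positive real part
`λ₀ > 0`, then for every `λ ∈ (0, λ₀)`, `β ∈ (0,1)` and sufficiently small `ε > 0` there is
an initial datum `Z₀` at sup-distance `ε/2` from `Z*` whose solution exits the ball of
radius `2 ε^β` before time `((1-β)/λ)|ln ε|`. Here the norm on `(ℝ²)^N = (Fin N → ℂ)`
is the sup of the Euclidean norms of the components. -/
theorem unstable_point_fast_exit
    (N : ℕ) (hN : 1 ≤ N) (f : (Fin N → ℂ) → (Fin N → ℂ)) (hf : ContDiff ℝ 1 f)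
    (Zstar : Fin N → ℂ) (hZstar : f Zstar = 0)
    (lam₀ : ℝ) (hlam₀ : 0 < lam₀)
    (heig : ∃ μ : ℂ, μ.re = lam₀ ∧ IsJacobianEigenvalue N f Zstar μ) :
    ∀ lam : ℝ, 0 < lam → lam < lam₀ →
    ∀ β : ℝ, 0 < β → β < 1 →
    ∃ ε₀ > 0, ∀ ε : ℝ, 0 < ε → ε < ε₀ →
    ∃ (Z₀ : Fin N → ℂ) (Z : ℝ → Fin N → ℂ) (T : ℝ),
      ‖Z₀ - Zstar‖ = ε / 2 ∧ Z 0 = Z₀ ∧ 0 ≤ T ∧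
      (∀ t ∈ Set.Icc 0 T, HasDerivAt Z (f (Z t)) t) ∧
      2 * ε ^ β < ‖Z T - Zstar‖ ∧
      T ≤ (1 - β) / lam * |Real.log ε| := by
  intro lam hlam hlt β hβ0 hβ1
  obtain ⟨μ, hμ, hroot⟩ := heig
  obtain ⟨x, y, hxy, hx, hy⟩ := aux_eig _ _ μ hroot
  rw [hμ] at hx hy
  set A := fderiv ℝ f Zstar with hA
  obtain ⟨s, B, hs, hB, z₁, hz₁⟩ := aux_lyap N A lam₀ μ.im lam hlt x y hxy hx hy
  have hz₁n : 0 < ‖z₁‖ := by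
    rw [norm_pos_iff]; rintro rfl; simp at hz₁
  -- remainder
  set η : ℝ := 1 / (2 * ‖B‖ + 1) with hηd
  have hη : 0 < η := by positivity
  have hη' : 2 * ‖B‖ * η ≤ 1 := by
    rw [hηd, mul_one_div, div_le_one (by positivity)]; linarith
  have hdf : HasFDerivAt f A Zstar := (hf.differentiable one_ne_zero Zstar).hasFDerivAt
  have hrem := hdf.isLittleO.def hη
  obtain ⟨r, hr, hball⟩ := Metric.eventually_nhds_iff.1 hrem
  have hrem' : ∀ w, ‖w - Zstar‖ < r → ‖f w - A (w - Zstar)‖ ≤ η * ‖w - Zstar‖ := by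
    intro w hw
    have := hball (y := w) (by rwa [dist_eq_norm])
    simpa [hZstar] using this
  -- smallness
  set k : ℝ := B z₁ z₁ / (4 * ‖z₁‖ ^ 2) with hk
  have hkpos : 0 < k := by positivity
  set q : ℝ := 2 * (1 - β) * (1 - s / lam) with hq
  have hqneg : q < 0 := by
    have : 1 < s / lam := by rwa [one_lt_div hlam]
    have : 0 < (1 - β) * (s / lam - 1) := mul_pos (by linarith) (by linarith)
    rw [hq]; linarith
  have ev1 : ∀ᶠ ε : ℝ in 𝓝[>] 0, 9 * ‖B‖ / k < ε ^ q :=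
    (tendsto_rpow_neg_nhdsGT_zero hqneg).eventually_gt_atTop _
  have ev2 : ∀ᶠ ε : ℝ in 𝓝[>] 0, 3 * ε ^ β < r := by
    have h1 : Tendsto (fun ε : ℝ => 3 * ε ^ β) (𝓝 0) (𝓝 (3 * 0 ^ β)) :=
      ((Real.continuousAt_rpow_const 0 β (Or.inr hβ0.le)).tendsto).const_mul 3
    rw [Real.zero_rpow hβ0.ne', mul_zero] at h1
    exact (h1.mono_left nhdsWithin_le_nhds).eventually_lt_const hr
  have ev3 : ∀ᶠ ε : ℝ in 𝓝[>] 0, ε < 1 :=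
    (eventually_lt_nhds one_pos).filter_mono nhdsWithin_le_nhds
  obtain ⟨ε₀, hε₀, hsub⟩ := mem_nhdsGT_iff_exists_Ioo_subset.1 ((ev1.and ev2).and ev3)
  refine ⟨ε₀, hε₀, fun ε hε hεlt => ?_⟩
  obtain ⟨⟨h1, h2⟩, h3⟩ := hsub ⟨hε, hεlt⟩
  have hεβ : ε ≤ ε ^ β := by
    simpa using Real.rpow_le_rpow_of_exponent_ge hε h3.le hβ1.le
  have hεβ0 : 0 < ε ^ β := Real.rpow_pos_of_pos hε β
  set Tm : ℝ := (1 - β) / lam * |Real.log ε| with hTm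
  have hTm0 : 0 ≤ Tm := mul_nonneg (div_nonneg (by linarith) hlam.le) (abs_nonneg _)
  set Z₀ : Fin N → ℂ := Zstar + (ε / (2 * ‖z₁‖)) • z₁ with hZ₀
  have hZ₀n : ‖Z₀ - Zstar‖ = ε / 2 := by
    rw [hZ₀, add_sub_cancel_left, norm_smul, Real.norm_of_nonneg (by positivity)]
    field_simp
  obtain ⟨W, hW0, hW⟩ := aux_ode f hf Zstar r hr Z₀ Tm hTm0
  have hWc : ContinuousOn (fun t => ‖W t - Zstar‖) (Icc 0 Tm) := by
    intro t ht
    obtain ⟨w, hw, -⟩ := hW t ht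
    exact ((hw.continuousAt.sub continuousAt_const).norm).continuousWithinAt
  -- the trajectory reaches the level
  have hreach : ∃ t ∈ Icc 0 Tm, 3 * ε ^ β ≤ ‖W t - Zstar‖ := by
    by_contra! hc
    have hg := aux_growth A B s η Tm hTm0 hB hη' (fun t => W t - Zstar) (fun t => f (W t))
      (by
        intro t ht
        obtain ⟨w, hw, hwf⟩ := hW t ht
        rw [← hwf ((hc t ht).trans h2).le]
        exact hw.sub_const _)
      (by
        intro t ht
        exact hrem' _ ((hc t ht).trans h2))
    have hTmem : Tm ∈ Icc 0 Tm := right_mem_Icc.2 hTm0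
    have hup : B (W Tm - Zstar) (W Tm - Zstar) ≤ ‖B‖ * (3 * ε ^ β) * (3 * ε ^ β) := by
      refine (le_abs_self _).trans ((B.le_opNorm₂ _ _).trans ?_)
      have := (hc Tm hTmem).le
      gcongr
    have hlow : B (W 0 - Zstar) (W 0 - Zstar) = k * ε ^ 2 := by
      rw [hW0, hZ₀, add_sub_cancel_left, hk]
      simp only [map_smul, smul_apply, smul_eq_mul]
      field_simp
      ring
    rw [hlow] at hg
    have hexp : Real.exp (2 * s * Tm) = ε ^ q * (ε ^ β) ^ 2 / ε ^ 2 := by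
      have hlog : |Real.log ε| = - Real.log ε := abs_of_neg (Real.log_neg hε h3)
      have e2 : ε ^ 2 = Real.exp (Real.log ε * 2) := by
        rw [← Real.rpow_def_of_pos hε]; norm_num
      rw [e2, Real.rpow_def_of_pos hε, Real.rpow_def_of_pos hε, ← Real.exp_nat_mul,
        ← Real.exp_add, ← Real.exp_sub, hTm, hlog, hq]
      congr 1
      push_cast
      field_simp
      ring
    rw [hexp] at hg
    have hg2 : ε ^ q * k * (ε ^ β) ^ 2 ≤ 9 * ‖B‖ * (ε ^ β) ^ 2 := by
      calc ε ^ q * k * (ε ^ β) ^ 2 = ε ^ q * (ε ^ β) ^ 2 / ε ^ 2 * (k * ε ^ 2) := by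
            field_simp
        _ ≤ _ := hg
        _ ≤ _ := hup
        _ = _ := by ring
    have hg3 := le_of_mul_le_mul_right hg2 (by positivity)
    rw [div_lt_iff₀ hkpos] at h1
    linarith
  obtain ⟨t₁, ht₁, hge⟩ := hreach
  have h0lt : ‖W 0 - Zstar‖ ≤ 3 * ε ^ β := by
    rw [hW0, hZ₀n]; linarith
  have hivt : ∀ t ∈ Icc 0 Tm, 3 * ε ^ β ≤ ‖W t - Zstar‖ →
      ∃ τ ∈ Icc 0 t, ‖W τ - Zstar‖ = 3 * ε ^ β := by
    intro t ht h
    exact intermediate_value_Icc ht.1 (hWc.mono (Icc_subset_Icc_right ht.2)) ⟨h0lt, h⟩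
  have hclosed : IsClosed (Icc 0 Tm ∩ (fun t => ‖W t - Zstar‖) ⁻¹' {3 * ε ^ β}) :=
    hWc.preimage_isClosed_of_isClosed isClosed_Icc isClosed_singleton
  have hcomp : IsCompact (Icc 0 Tm ∩ (fun t => ‖W t - Zstar‖) ⁻¹' {3 * ε ^ β}) :=
    isCompact_Icc.of_isClosed_subset hclosed inter_subset_left
  obtain ⟨τ₁, hτ₁, hτ₁e⟩ := hivt t₁ ht₁ hge
  obtain ⟨T, ⟨hTI, hTe⟩, hTmin⟩ := hcomp.exists_isLeast
    ⟨τ₁, ⟨hτ₁.1, hτ₁.2.trans ht₁.2⟩, hτ₁e⟩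
  have hTe' : ‖W T - Zstar‖ = 3 * ε ^ β := hTe
  refine ⟨Z₀, W, T, hZ₀n, hW0, hTI.1, ?_, ?_, hTI.2⟩
  · intro t ht
    have htI : t ∈ Icc 0 Tm := ⟨ht.1, ht.2.trans hTI.2⟩
    have hle : ‖W t - Zstar‖ ≤ 3 * ε ^ β := by
      by_contra! hc
      obtain ⟨τ, hτ, hτe⟩ := hivt t htI hc.le
      have h5 : T ≤ τ := hTmin ⟨⟨hτ.1, hτ.2.trans htI.2⟩, hτe⟩
      have h6 : t = T := le_antisymm ht.2 (h5.trans hτ.2)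
      rw [h6, hTe'] at hc
      exact lt_irrefl _ hc
    obtain ⟨w, hw, hwf⟩ := hW t htI
    rw [← hwf (hle.trans h2.le)]
    exact hw
  · rw [hTe']; linarith
end

section
/- Let α ∈ [1,2). Let M_α be the 6×6 real matrix with rows: row 1 = (0, 2^{−(α+1)}, 0, 2^{−(α+1)}, 0, −2^{−α}); row 2 = (2^{−(α+1)}α, 0, 2^{−(α+1)}α, 0, −2^{−α}α, 0); row 3 = (0, 2^{−(α+1)}, 0, 2^{−(α+1)}, 0, −2^{−α}); row 4 = (2^{−(α+1)}α, 0, 2^{−(α+1)}α, 0, −2^{−α}α, 0); row 5 = (0, 1, 0, 1, 0, −2); row 6 = (α, 0, α, 0, −2α, 0). Then the characteristic polynomial of M_α equals X⁶ − α(2 − 2^{−α})² X⁴; equivalently, the eigenvalues of M_α are 0 with algebraic multiplicity 4 and ±(2 − 2^{−α})√α, each with multiplicity 1. -/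
open Polynomial

/-- `1/C_α` times the Jacobian of the `α`-point-vortex vector field at the stationary
three-vortex configuration `z₁* = (−1,0)`, `z₂* = (1,0)`, `z₃* = (0,0)` with intensities
`(1, 1, −2^{−α})`, as a `6 × 6` matrix in the coordinates `(p₁,q₁,p₂,q₂,p₃,q₃)`. -/
noncomputable def threeVortexJacobian (α : ℝ) : Matrix (Fin 6) (Fin 6) ℝ :=
  !![0, (2:ℝ) ^ (-(α+1)), 0, (2:ℝ) ^ (-(α+1)), 0, -(2:ℝ) ^ (-α);
     (2:ℝ) ^ (-(α+1)) * α, 0, (2:ℝ) ^ (-(α+1)) * α, 0, -(2:ℝ) ^ (-α) * α, 0;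
     0, (2:ℝ) ^ (-(α+1)), 0, (2:ℝ) ^ (-(α+1)), 0, -(2:ℝ) ^ (-α);
     (2:ℝ) ^ (-(α+1)) * α, 0, (2:ℝ) ^ (-(α+1)) * α, 0, -(2:ℝ) ^ (-α) * α, 0;
     0, 1, 0, 1, 0, -2;
     α, 0, α, 0, -2 * α, 0]

/-- the characteristic polynomial of `M_α` is
`X⁶ − α (2 − 2^{−α})² X⁴`; equivalently, the eigenvalues of `M_α` are `0` (with algebraic
multiplicity 4) and `±(2 − 2^{−α})√α` (each with multiplicity 1). -/
theorem three_vortex_jacobian_charpoly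
    (α : ℝ) (hα : 1 ≤ α) (hα' : α < 2) :
    (threeVortexJacobian α).charpoly
      = X ^ 6 - C (α * (2 - (2:ℝ) ^ (-α)) ^ 2) * X ^ 4 := by
  have h2 : (2:ℝ) ^ (-(α+1)) = (2:ℝ) ^ (-α) / 2 := by
    rw [neg_add, Real.rpow_add (by norm_num), Real.rpow_neg_one]; ring
  unfold threeVortexJacobian
  rw [h2]
  generalize (2:ℝ) ^ (-α) = t
  let A : Matrix (Fin 6) (Fin 2) ℝ :=
    !![t/2, 0; 0, t/2*α; t/2, 0; 0, t/2*α; 1, 0; 0, α]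
  let B : Matrix (Fin 2) (Fin 6) ℝ :=
    !![0, 1, 0, 1, 0, -2; 1, 0, 1, 0, -2, 0]
  have hBA : B * A = !![0, α * (t - 2); t - 2, 0] := by
    ext i j
    fin_cases i <;> fin_cases j <;>
      simp [A, B, Matrix.mul_apply, Fin.sum_univ_succ] <;> ring
  have h := Matrix.charpoly_mul_comm' A B
  rw [hBA, Matrix.charpoly_fin_two] at h
  simp only [Fintype.card_fin] at h
  have hX : (X ^ 2 : ℝ[X]) ≠ 0 := pow_ne_zero _ X_ne_zero
  have hAB : (A * B).charpoly = X ^ 6 - C (α * (2 - t) ^ 2) * X ^ 4 := by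
    apply mul_left_cancel₀ hX
    rw [h]
    simp [Matrix.trace_fin_two, Matrix.det_fin_two]
    ring
  rw [← hAB]
  apply congrArg Matrix.charpoly
  ext i j
  fin_cases i <;> fin_cases j <;>
    simp [A, B, Matrix.mul_apply] <;> ring
end
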